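/- Let Θ be a real skew-symmetric n×n matrix, Λ an m×n complex matrix, and let S be the real n×n matrix whose (j,k) entry is the imaginary part of the (j,k) entry of Λ†Λ, where Λ† denotes the conjugate transpose of Λ. Let B be a real n×p matrix and T a complex p×p matrix. For any two real symmetric n×n matrices R₁ and R₂, set A₁ := 2Θ(R₁ + S) and A₂ := 2Θ(R₂ + S). Then, with all matrices viewed as complex matrices, the equation i·A₁Θ + i·ΘA₁ᵀ + B·T·Bᵀ = 0 holds if and only if i·A₂Θ + i·ΘA₂ᵀ + B·T·Bᵀ = 0. -/

import Mathlib

open Matrix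

/-!
For skew-symmetric `Θ` and symmetric `R`, the matrix `ΘR` is Hamiltonian, so it preserves `Θ`
infinitesimally: `(ΘR)Θ + Θ(ΘR)ᵀ = ΘRΘ - ΘRΘ = 0`. As `AΘ + ΘAᵀ` is linear in `A`, the summand
`2ΘR` of the drift matrix contributes nothing to it.
-/

section InfinitesimalCongr

variable {ι K L : Type*} [Fintype ι] [CommRing K] [CommRing L]

/-- The derivative `A ↦ AΘ + ΘAᵀ` of the congruence `P ↦ PΘPᵀ` at `P = 1`. It is the rate of change
of the commutation matrix `Θ` under the drift `A`, as a linear map in `A`. -/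
def infinitesimalCongr (Θ : Matrix ι ι K) : Matrix ι ι K →ₗ[K] Matrix ι ι K where
  toFun A := A * Θ + Θ * Aᵀ
  map_add' A B := by
    rw [transpose_add, add_mul, mul_add, add_add_add_comm]
  map_smul' a A := by
    rw [transpose_smul, smul_mul_assoc, mul_smul_comm, ← smul_add, RingHom.id_apply]

theorem infinitesimalCongr_apply (Θ A : Matrix ι ι K) :
    infinitesimalCongr Θ A = A * Θ + Θ * Aᵀ :=
  rfl

theorem infinitesimalCongr_map (f : K →+* L) (Θ A : Matrix ι ι K) :
    infinitesimalCongr (Θ.map f) (A.map f) = (infinitesimalCongr Θ A).map f := by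
  simp only [infinitesimalCongr_apply, Matrix.map_add f (map_add f), Matrix.map_mul, transpose_map]

theorem infinitesimalCongr_mul_eq_zero {Θ R : Matrix ι ι K} (hΘ : Θᵀ = -Θ) (hR : R.IsSymm) :
    infinitesimalCongr Θ (Θ * R) = 0 := by
  rw [infinitesimalCongr_apply, transpose_mul, hR.eq, hΘ, mul_neg, mul_neg, ← mul_assoc,
    add_neg_cancel]

theorem infinitesimalCongr_smul_mul_add {Θ R : Matrix ι ι K} (hΘ : Θᵀ = -Θ) (hR : R.IsSymm)
    (a : K) (S : Matrix ι ι K) :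
    infinitesimalCongr Θ (a • (Θ * (R + S))) = infinitesimalCongr Θ (a • (Θ * S)) := by
  rw [map_smul, mul_add, map_add, infinitesimalCongr_mul_eq_zero hΘ hR, zero_add, map_smul]

theorem stmt1_general (f : K →+* L) {Θ S R₁ R₂ A₁ A₂ : Matrix ι ι K} {a : K} {c : L}
    {Q : Matrix ι ι L} (hΘ : Θᵀ = -Θ) (hR₁ : R₁.IsSymm) (hR₂ : R₂.IsSymm)
    (hA₁ : A₁ = a • (Θ * (R₁ + S))) (hA₂ : A₂ = a • (Θ * (R₂ + S))) :
    c • (A₁.map f * Θ.map f) + c • (Θ.map f * (A₁.map f)ᵀ) + Q = 0 ↔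
      c • (A₂.map f * Θ.map f) + c • (Θ.map f * (A₂.map f)ᵀ) + Q = 0 := by
  have derivative_eq : infinitesimalCongr Θ A₁ = infinitesimalCongr Θ A₂ := by
    rw [hA₁, hA₂, infinitesimalCongr_smul_mul_add hΘ hR₁, infinitesimalCongr_smul_mul_add hΘ hR₂]
  simp only [← smul_add, ← infinitesimalCongr_apply, infinitesimalCongr_map, derivative_eq]

end InfinitesimalCongr

/-- The commutation-relation preservation condition
`i•A Θ + i•Θ Aᵀ + B T Bᵀ = 0` (over ℂ) for `A = 2Θ(R + S)` does not depend on the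
choice of the real symmetric Hamiltonian matrix `R`. -/
theorem stmt1 (n m p : ℕ) (Θ : Matrix (Fin n) (Fin n) ℝ) (hΘ : Θᵀ = -Θ)
    (Λ : Matrix (Fin m) (Fin n) ℂ)
    (S : Matrix (Fin n) (Fin n) ℝ)
    (hS : ∀ j k, S j k = ((Λᴴ * Λ) j k).im)
    (B : Matrix (Fin n) (Fin p) ℝ) (T : Matrix (Fin p) (Fin p) ℂ)
    (R₁ R₂ : Matrix (Fin n) (Fin n) ℝ) (hR₁ : R₁ᵀ = R₁) (hR₂ : R₂ᵀ = R₂)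
    (A₁ A₂ : Matrix (Fin n) (Fin n) ℝ)
    (hA₁ : A₁ = (2 : ℝ) • (Θ * (R₁ + S)))
    (hA₂ : A₂ = (2 : ℝ) • (Θ * (R₂ + S))) :
    (Complex.I • ((A₁.map Complex.ofReal) * (Θ.map Complex.ofReal))
        + Complex.I • ((Θ.map Complex.ofReal) * (A₁.map Complex.ofReal)ᵀ)
        + (B.map Complex.ofReal) * T * (B.map Complex.ofReal)ᵀ = 0)
      ↔
    (Complex.I • ((A₂.map Complex.ofReal) * (Θ.map Complex.ofReal))
        + Complex.I • ((Θ.map Complex.ofReal) * (A₂.map Complex.ofReal)ᵀ)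
        + (B.map Complex.ofReal) * T * (B.map Complex.ofReal)ᵀ = 0) :=
  stmt1_general Complex.ofRealHom hΘ hR₁ hR₂ hA₁ hA₂
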